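/- The extended group operation (u,γ) ★ (v,δ) = (v + δ_∅ u, γ ⋆ Ξ_u δ) makes Ḡ = ℂ^d × G into a group with identity (0,𝟙); in particular the operation is associative, (0,𝟙) is a two-sided unit, and every element of Ḡ has an inverse. -/

import Mathlib

noncomputable def conv {A : Type*} (δ δ' : List A → ℂ) : List A → ℂ :=
  fun w => ∑ j ∈ Finset.range (w.length + 1), δ (w.take j) * δ' (w.drop j)

noncomputable def convOne {A : Type*} [DecidableEq A] : List A → ℂ :=
  fun w => if w = [] then 1 else 0

def shuffle {A : Type*} : List A → List A → Multiset (List A)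
  | [], w => {w}
  | l :: w, [] => {l :: w}
  | a :: w, b :: w' =>
      ((shuffle w (b :: w')).map (a :: ·)) + ((shuffle (a :: w) w').map (b :: ·))
  termination_by w w' => w.length + w'.length

def IsShuffleChar {A : Type*} (γ : List A → ℂ) : Prop :=
  γ [] = 1 ∧ ∀ w w' : List A, γ w * γ w' = ((shuffle w w').map γ).sum

/-- `Ξ_u`: multiplies the coefficient of `ℓ₁⋯ℓₙ` by `exp(ν^u_{ℓ₁+⋯+ℓₙ})`,
where `ν^u_ℓ = Σⱼ uⱼ ν_{j,ℓ}` (the empty word coefficient is fixed since the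
empty sum of letters is `0` and `ν` is additive with `ν_{j,0}=0`). -/
noncomputable def XiU {d : ℕ} {A : Type*} [AddCommMonoid A]
    (ν : Fin d → A → ℂ) (u : Fin d → ℂ) (δ : List A → ℂ) : List A → ℂ :=
  fun w => Complex.exp (∑ j, u j * ν j w.sum) * δ w

/-- The extended group operation `(u,γ) ★ (v,δ) = (v + δ_∅ u, γ ⋆ Ξ_u δ)`. -/
noncomputable def extStar {d : ℕ} {A : Type*} [AddCommMonoid A]
    (ν : Fin d → A → ℂ) (p q : (Fin d → ℂ) × (List A → ℂ)) :
    (Fin d → ℂ) × (List A → ℂ) :=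
  (q.1 + q.2 [] • p.1, conv p.2 (XiU ν p.1 q.2))

/-! A character `γ` is inverted by its antipode `w ↦ (-1)^|w| γ(reverse w)`: the character property
turns `(antipode γ ⋆ γ)(w)` into the alternating sum, over all splittings `w = uv`, of the values
of `γ` on the shuffles of `reverse u` with `v`. Such a shuffle begins with the last letter of `u` or
the first letter of `v`, so moving that letter across the cut cancels the sum in pairs.

`Ξ` is an additive action of `ℂ^d` on series by automorphisms of `⋆` which preserves characters,
because the factor `exp(ν^u)` depends only on the multiset of letters. Hence `★` is the operation of
a semidirect product. -/

section Shuffle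

variable {A : Type*}

theorem shuffle_nil_left (w : List A) : shuffle [] w = {w} := by
  simp [shuffle]

theorem shuffle_nil_right (w : List A) : shuffle w [] = {w} := by
  cases w <;> simp [shuffle]

theorem shuffle_cons_cons (a b : A) (v w : List A) :
    shuffle (a :: v) (b :: w) =
      (shuffle v (b :: w)).map (a :: ·) + (shuffle (a :: v) w).map (b :: ·) := by
  rw [shuffle]

theorem perm_append_of_mem_shuffle {x : List A} :
    ∀ {v w : List A}, x ∈ shuffle v w → x.Perm (v ++ w)
  | [], w, hx => by simp_all [shuffle_nil_left]
  | a :: v, [], hx => by simp_all [shuffle_nil_right]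
  | a :: v, b :: w, hx => by
    simp only [shuffle_cons_cons, Multiset.mem_add, Multiset.mem_map] at hx
    obtain ⟨y, hy, rfl⟩ | ⟨y, hy, rfl⟩ := hx
    · exact (perm_append_of_mem_shuffle hy).cons a
    · exact ((perm_append_of_mem_shuffle hy).cons b).trans List.perm_middle.symm
  termination_by v w => v.length + w.length

theorem shuffle_concat_concat (a b : A) : ∀ v w : List A,
    shuffle (v ++ [a]) (w ++ [b]) =
      (shuffle v (w ++ [b])).map (· ++ [a]) + (shuffle (v ++ [a]) w).map (· ++ [b])
  | [], [] => by
    simp [shuffle_cons_cons, shuffle_nil_left, shuffle_nil_right, add_comm]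
  | c :: v, [] => by
    have ih := shuffle_concat_concat a b v []
    simp only [List.nil_append, shuffle_nil_right] at ih
    simp [shuffle_cons_cons, shuffle_nil_right, ih, add_right_comm]
  | [], e :: w => by
    have ih := shuffle_concat_concat a b [] w
    simp only [List.nil_append, shuffle_nil_left] at ih
    simp [shuffle_cons_cons, shuffle_nil_left, ih, Multiset.cons_swap]
  | c :: v, e :: w => by
    have ih_left := shuffle_concat_concat a b v (e :: w)
    have ih_right := shuffle_concat_concat a b (c :: v) w
    simp only [List.cons_append] at ih_left ih_right
    simp only [List.cons_append, shuffle_cons_cons, ih_left, ih_right, Multiset.map_add,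
      Multiset.map_map, Function.comp_def]
    abel
  termination_by v w => v.length + w.length

theorem shuffle_reverse_reverse : ∀ v w : List A,
    shuffle v.reverse w.reverse = (shuffle v w).map List.reverse
  | [], w => by simp [shuffle_nil_left]
  | a :: v, [] => by simp [shuffle_nil_right]
  | a :: v, b :: w => by
    have ih_left := shuffle_reverse_reverse v (b :: w)
    have ih_right := shuffle_reverse_reverse (a :: v) w
    simp only [List.reverse_cons] at ih_left ih_right
    simp [shuffle_concat_concat, shuffle_cons_cons, ih_left, ih_right]
  termination_by v w => v.length + w.length

end Shuffle

section ShuffleSum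

variable {A : Type*}

/-- The value `⟨γ, v ⧢ w⟩` of a series `γ` on the shuffle product of two words. -/
noncomputable def shuffleSum (γ : List A → ℂ) (v w : List A) : ℂ :=
  ((shuffle v w).map γ).sum

/-- The left derivative of a series by a letter, i.e. the adjoint of left multiplication of words by
that letter; inductions on words are phrased through it. -/
def leftDeriv (a : A) (γ : List A → ℂ) : List A → ℂ :=
  fun w => γ (a :: w)

theorem shuffleSum_nil_left (γ : List A → ℂ) (w : List A) : shuffleSum γ [] w = γ w := by
  simp [shuffleSum, shuffle_nil_left]

theorem shuffleSum_nil_right (γ : List A → ℂ) (w : List A) : shuffleSum γ w [] = γ w := by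
  simp [shuffleSum, shuffle_nil_right]

theorem shuffleSum_cons_cons (γ : List A → ℂ) (a b : A) (v w : List A) :
    shuffleSum γ (a :: v) (b :: w) =
      shuffleSum (leftDeriv a γ) v (b :: w) + shuffleSum (leftDeriv b γ) (a :: v) w := by
  simp only [shuffleSum, shuffle_cons_cons, Multiset.map_add, Multiset.map_map, Multiset.sum_add]
  rfl

theorem shuffleSum_add (γ δ : List A → ℂ) (v w : List A) :
    shuffleSum (γ + δ) v w = shuffleSum γ v w + shuffleSum δ v w :=
  Multiset.sum_map_add

theorem shuffleSum_smul (c : ℂ) (γ : List A → ℂ) (v w : List A) :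
    shuffleSum (c • γ) v w = c * shuffleSum γ v w :=
  Multiset.sum_map_mul_left

theorem sum_shuffleSum_reverse_take_append (γ : List A → ℂ) (a : A) (v w : List A) :
    ∑ j ∈ Finset.range (w.length + 1),
        (-1) ^ j * shuffleSum γ ((w.take j).reverse ++ a :: v) (w.drop j) =
      shuffleSum (leftDeriv a γ) v w := by
  induction w generalizing a v with
  | nil => simp [shuffleSum_nil_right, leftDeriv]
  | cons b w ih =>
    have tail_sum : ∑ j ∈ Finset.range (w.length + 1), (-1) ^ (j + 1) *
          shuffleSum γ (((b :: w).take (j + 1)).reverse ++ a :: v) ((b :: w).drop (j + 1)) =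
        -shuffleSum (leftDeriv b γ) (a :: v) w := by
      simp [← ih, pow_succ]
    rw [List.length_cons, Finset.sum_range_succ', tail_sum]
    simp [shuffleSum_cons_cons]

theorem sum_shuffleSum_reverse_take_cons_eq_zero (γ : List A → ℂ) (a : A) (w : List A) :
    ∑ j ∈ Finset.range ((a :: w).length + 1),
      (-1) ^ j * shuffleSum γ ((a :: w).take j).reverse ((a :: w).drop j) = 0 := by
  have tail_sum := sum_shuffleSum_reverse_take_append γ a [] w
  rw [List.length_cons, Finset.sum_range_succ']
  simp [pow_succ, tail_sum, shuffleSum_nil_left, leftDeriv]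

end ShuffleSum

section Convolution

variable {A : Type*}

theorem conv_nil (γ δ : List A → ℂ) : conv γ δ [] = γ [] * δ [] := by
  simp [conv]

theorem conv_cons (γ δ : List A → ℂ) (a : A) (w : List A) :
    conv γ δ (a :: w) = γ [] * δ (a :: w) + conv (leftDeriv a γ) δ w := by
  rw [conv, List.length_cons, Finset.sum_range_succ']
  simp [conv, leftDeriv, add_comm]

theorem leftDeriv_conv (a : A) (γ δ : List A → ℂ) :
    leftDeriv a (conv γ δ) = γ [] • leftDeriv a δ + conv (leftDeriv a γ) δ :=
  funext fun w => conv_cons γ δ a w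

theorem conv_add_left (γ γ' δ : List A → ℂ) : conv (γ + γ') δ = conv γ δ + conv γ' δ := by
  funext w
  simp [conv, add_mul, Finset.sum_add_distrib]

theorem conv_smul_left (c : ℂ) (γ δ : List A → ℂ) : conv (c • γ) δ = c • conv γ δ := by
  funext w
  simp [conv, mul_assoc, Finset.mul_sum]

theorem conv_assoc (γ δ ε : List A → ℂ) : conv (conv γ δ) ε = conv γ (conv δ ε) := by
  funext w
  induction w generalizing γ with
  | nil => simp [conv_nil, mul_assoc]
  | cons a w ih =>
    calc conv (conv γ δ) ε (a :: w)
        = γ [] * δ [] * ε (a :: w) +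
            (γ [] * conv (leftDeriv a δ) ε w + conv (conv (leftDeriv a γ) δ) ε w) := by
          simp [conv_cons, conv_nil, leftDeriv_conv, conv_add_left, conv_smul_left]
      _ = γ [] * conv δ ε (a :: w) + conv (leftDeriv a γ) (conv δ ε) w := by
          rw [ih, conv_cons]
          ring
      _ = conv γ (conv δ ε) (a :: w) := (conv_cons γ (conv δ ε) a w).symm

theorem convOne_conv [DecidableEq A] (γ : List A → ℂ) : conv convOne γ = γ := by
  funext w
  cases w <;> simp [convOne, conv]

theorem conv_convOne [DecidableEq A] (γ : List A → ℂ) : conv γ convOne = γ := by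
  funext w
  induction w generalizing γ with
  | nil => simp [conv_nil, convOne]
  | cons a w ih => simp [conv_cons, ih, convOne, leftDeriv]

theorem shuffleSum_conv (δ : List A → ℂ) : ∀ (γ : List A → ℂ) (v w : List A),
    shuffleSum (conv γ δ) v w =
      ∑ i ∈ Finset.range (v.length + 1), ∑ j ∈ Finset.range (w.length + 1),
        shuffleSum γ (v.take i) (w.take j) * shuffleSum δ (v.drop i) (w.drop j)
  | γ, [], w => by simp [shuffleSum_nil_left, conv]
  | γ, a :: v, [] => by simp [shuffleSum_nil_right, conv]
  | γ, a :: v, b :: w => by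
    have ih_left := shuffleSum_conv δ (leftDeriv a γ) v (b :: w)
    have ih_right := shuffleSum_conv δ (leftDeriv b γ) (a :: v) w
    rw [shuffleSum_cons_cons, leftDeriv_conv, leftDeriv_conv, shuffleSum_add, shuffleSum_add,
      shuffleSum_smul, shuffleSum_smul, ih_left, ih_right]
    -- Splitting off the empty prefixes makes `shuffleSum_cons_cons` applicable to all other terms.
    simp only [List.length_cons, Finset.sum_range_succ' _ (v.length + 1),
      Finset.sum_range_succ' _ (w.length + 1), List.take_succ_cons, List.drop_succ_cons,
      List.take_zero, List.drop_zero, shuffleSum_nil_left, shuffleSum_nil_right,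
      shuffleSum_cons_cons, Finset.sum_add_distrib, add_mul, mul_add]
    simp only [leftDeriv]
    ring
  termination_by _ v w => v.length + w.length

end Convolution

section Character

variable {A : Type*} {γ δ : List A → ℂ}

theorem IsShuffleChar.mul_eq_shuffleSum (hγ : IsShuffleChar γ) (v w : List A) :
    γ v * γ w = shuffleSum γ v w :=
  hγ.2 v w

theorem IsShuffleChar.conv (hγ : IsShuffleChar γ) (hδ : IsShuffleChar δ) :
    IsShuffleChar (conv γ δ) := by
  refine ⟨by simp [conv_nil, hγ.1, hδ.1], fun v w => ?_⟩
  change _ = shuffleSum _ v w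
  simp only [shuffleSum_conv, ← hγ.mul_eq_shuffleSum, ← hδ.mul_eq_shuffleSum, _root_.conv,
    Finset.sum_mul_sum, mul_mul_mul_comm]

theorem IsShuffleChar.mul_of_perm {χ : List A → ℂ} (hχ_nil : χ [] = 1)
    (hχ_perm : ∀ {x v w : List A}, x.Perm (v ++ w) → χ x = χ v * χ w) (hγ : IsShuffleChar γ) :
    IsShuffleChar fun w => χ w * γ w := by
  refine ⟨by simp [hχ_nil, hγ.1], fun v w => ?_⟩
  calc χ v * γ v * (χ w * γ w) = χ v * χ w * (γ v * γ w) := mul_mul_mul_comm ..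
    _ = ((shuffle v w).map fun x => χ v * χ w * γ x).sum := by
      rw [hγ.2, Multiset.sum_map_mul_left]
    _ = ((shuffle v w).map fun x => χ x * γ x).sum := by
      refine congrArg _ (Multiset.map_congr rfl fun x hx => ?_)
      rw [hχ_perm (perm_append_of_mem_shuffle hx)]

theorem IsShuffleChar.comp_reverse (hγ : IsShuffleChar γ) :
    IsShuffleChar fun w => γ w.reverse :=
  ⟨hγ.1, fun v w => by simp [hγ.2, shuffle_reverse_reverse]⟩

/-- The antipode of the shuffle Hopf algebra, transposed to series; on characters it is the inverse
for `⋆`. -/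
noncomputable def antipode (γ : List A → ℂ) : List A → ℂ :=
  fun w => (-1) ^ w.length * γ w.reverse

theorem antipode_antipode (γ : List A → ℂ) : antipode (antipode γ) = γ := by
  funext w
  simp [antipode, ← mul_assoc, ← mul_pow]

theorem IsShuffleChar.antipode (hγ : IsShuffleChar γ) : IsShuffleChar (antipode γ) :=
  hγ.comp_reverse.mul_of_perm (by simp) fun hx => by simp [hx.length_eq, pow_add]

theorem antipode_conv_self [DecidableEq A] (hγ : IsShuffleChar γ) :
    conv (antipode γ) γ = convOne := by
  funext w
  have conv_eq_sum : conv (antipode γ) γ w = ∑ j ∈ Finset.range (w.length + 1),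
      (-1) ^ j * shuffleSum γ (w.take j).reverse (w.drop j) := by
    refine Finset.sum_congr rfl fun j hj => ?_
    have length_take : (w.take j).length = j :=
      List.length_take_of_le (Finset.mem_range_succ_iff.mp hj)
    rw [← hγ.mul_eq_shuffleSum, antipode, length_take, mul_assoc]
  rw [conv_eq_sum]
  cases w with
  | nil => simp [shuffleSum_nil_left, hγ.1, convOne]
  | cons a w => simpa [convOne] using sum_shuffleSum_reverse_take_cons_eq_zero γ a w

theorem conv_antipode_self [DecidableEq A] (hγ : IsShuffleChar γ) :
    conv γ (antipode γ) = convOne := by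
  simpa only [antipode_antipode] using antipode_conv_self hγ.antipode

end Character

section Xi

theorem exp_sum_mul_add {d : ℕ} {A : Type*} [Add A] {ν : Fin d → A → ℂ}
    (hν : ∀ (j : Fin d) (ℓ ℓ' : A), ν j (ℓ + ℓ') = ν j ℓ + ν j ℓ')
    (u : Fin d → ℂ) (ℓ ℓ' : A) :
    Complex.exp (∑ j, u j * ν j (ℓ + ℓ')) =
      Complex.exp (∑ j, u j * ν j ℓ) * Complex.exp (∑ j, u j * ν j ℓ') := by
  simp only [hν, mul_add, Finset.sum_add_distrib, Complex.exp_add]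

variable {d : ℕ} {A : Type*} [AddCommMonoid A] {ν : Fin d → A → ℂ}

theorem XiU_nil (hν0 : ∀ j : Fin d, ν j 0 = 0) (u : Fin d → ℂ) (γ : List A → ℂ) :
    XiU ν u γ [] = γ [] := by
  simp [XiU, hν0]

theorem XiU_zero (ν : Fin d → A → ℂ) (γ : List A → ℂ) : XiU ν 0 γ = γ := by
  funext w
  simp [XiU]

theorem XiU_XiU (ν : Fin d → A → ℂ) (u v : Fin d → ℂ) (γ : List A → ℂ) :
    XiU ν u (XiU ν v γ) = XiU ν (u + v) γ := by
  funext w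
  simp [XiU, add_mul, Finset.sum_add_distrib, Complex.exp_add, mul_assoc]

theorem XiU_convOne [DecidableEq A] (hν0 : ∀ j : Fin d, ν j 0 = 0) (u : Fin d → ℂ) :
    XiU ν u convOne = convOne := by
  funext w
  cases w <;> simp [XiU, convOne, hν0]

theorem XiU_conv (hν : ∀ (j : Fin d) (ℓ ℓ' : A), ν j (ℓ + ℓ') = ν j ℓ + ν j ℓ')
    (u : Fin d → ℂ) (γ δ : List A → ℂ) :
    XiU ν u (conv γ δ) = conv (XiU ν u γ) (XiU ν u δ) := by
  funext w
  simp only [XiU, conv, Finset.mul_sum]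
  refine Finset.sum_congr rfl fun j _ => ?_
  rw [← List.sum_take_add_sum_drop w j, exp_sum_mul_add hν, mul_mul_mul_comm]

theorem IsShuffleChar.XiU (hν : ∀ (j : Fin d) (ℓ ℓ' : A), ν j (ℓ + ℓ') = ν j ℓ + ν j ℓ')
    (hν0 : ∀ j : Fin d, ν j 0 = 0) (u : Fin d → ℂ) {γ : List A → ℂ} (hγ : IsShuffleChar γ) :
    IsShuffleChar (XiU ν u γ) :=
  hγ.mul_of_perm (by simp [hν0]) fun hx => by
    rw [hx.sum_eq, List.sum_append, exp_sum_mul_add hν]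

end Xi

section ExtStar

variable {d : ℕ} {A : Type*} [AddCommMonoid A] {ν : Fin d → A → ℂ}

theorem extStar_assoc (hν : ∀ (j : Fin d) (ℓ ℓ' : A), ν j (ℓ + ℓ') = ν j ℓ + ν j ℓ')
    (hν0 : ∀ j : Fin d, ν j 0 = 0) (p : (Fin d → ℂ) × (List A → ℂ))
    {q : (Fin d → ℂ) × (List A → ℂ)} (hq : q.2 [] = 1) (r : (Fin d → ℂ) × (List A → ℂ)) :
    extStar ν (extStar ν p q) r = extStar ν p (extStar ν q r) := by
  refine Prod.ext ?_ ?_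
  · simp [extStar, conv_nil, XiU_nil hν0, hq, add_assoc]
  · simp [extStar, hq, conv_assoc, XiU_conv hν, XiU_XiU, add_comm]

theorem one_extStar [DecidableEq A] (ν : Fin d → A → ℂ) (p : (Fin d → ℂ) × (List A → ℂ)) :
    extStar ν (0, convOne) p = p := by
  simp [extStar, XiU_zero, convOne_conv]

theorem extStar_one [DecidableEq A] (hν0 : ∀ j : Fin d, ν j 0 = 0)
    (p : (Fin d → ℂ) × (List A → ℂ)) : extStar ν p (0, convOne) = p := by
  refine Prod.ext ?_ ?_
  · simp [extStar, convOne]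
  · simp [extStar, XiU_convOne hν0, conv_convOne]

/-- The inverse `(-u, Ξ_{-u} γ⁻¹)` of `(u, γ)` for `★`, where `γ⁻¹` is the antipode of `γ`. -/
noncomputable def extInv (ν : Fin d → A → ℂ) (p : (Fin d → ℂ) × (List A → ℂ)) :
    (Fin d → ℂ) × (List A → ℂ) :=
  (-p.1, XiU ν (-p.1) (antipode p.2))

theorem extStar_extInv [DecidableEq A] (hν0 : ∀ j : Fin d, ν j 0 = 0)
    {p : (Fin d → ℂ) × (List A → ℂ)} (hp : IsShuffleChar p.2) :
    extStar ν p (extInv ν p) = (0, convOne) := by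
  refine Prod.ext ?_ ?_
  · simp [extStar, extInv, XiU_nil hν0, hp.antipode.1]
  · simp [extStar, extInv, XiU_XiU, XiU_zero, conv_antipode_self hp]

theorem extInv_extStar [DecidableEq A]
    (hν : ∀ (j : Fin d) (ℓ ℓ' : A), ν j (ℓ + ℓ') = ν j ℓ + ν j ℓ')
    (hν0 : ∀ j : Fin d, ν j 0 = 0) {p : (Fin d → ℂ) × (List A → ℂ)} (hp : IsShuffleChar p.2) :
    extStar ν (extInv ν p) p = (0, convOne) := by
  refine Prod.ext ?_ ?_
  · simp [extStar, extInv, hp.1]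
  · simp [extStar, extInv, ← XiU_conv hν, antipode_conv_self hp, XiU_convOne hν0]

end ExtStar

/-- `Ḡ = ℂ^d × G` is a group under `★`, with identity `(0,𝟙)`. -/
theorem extStar_group {d : ℕ} {A : Type*} [AddCommMonoid A] [DecidableEq A]
    (ν : Fin d → A → ℂ)
    (hν : ∀ (j : Fin d) (ℓ ℓ' : A), ν j (ℓ + ℓ') = ν j ℓ + ν j ℓ')
    (hν0 : ∀ j : Fin d, ν j 0 = 0) :
    (∀ p q : (Fin d → ℂ) × (List A → ℂ), IsShuffleChar p.2 → IsShuffleChar q.2 →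
      IsShuffleChar (extStar ν p q).2) ∧
    (∀ p q r : (Fin d → ℂ) × (List A → ℂ),
      IsShuffleChar p.2 → IsShuffleChar q.2 → IsShuffleChar r.2 →
      extStar ν (extStar ν p q) r = extStar ν p (extStar ν q r)) ∧
    (∀ p : (Fin d → ℂ) × (List A → ℂ), IsShuffleChar p.2 →
      extStar ν ((0 : Fin d → ℂ), (convOne : List A → ℂ)) p = p ∧
      extStar ν p ((0 : Fin d → ℂ), (convOne : List A → ℂ)) = p) ∧
    (∀ p : (Fin d → ℂ) × (List A → ℂ), IsShuffleChar p.2 →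
      ∃ q : (Fin d → ℂ) × (List A → ℂ), IsShuffleChar q.2 ∧
        extStar ν p q = ((0 : Fin d → ℂ), (convOne : List A → ℂ)) ∧
        extStar ν q p = ((0 : Fin d → ℂ), (convOne : List A → ℂ))) := by
  refine ⟨fun p q hp hq => ?_, fun p q r _ hq _ => ?_, fun p _ => ?_, fun p hp => ?_⟩
  · exact hp.conv (hq.XiU hν hν0 p.1)
  · exact extStar_assoc hν hν0 p hq.1 r
  · exact ⟨one_extStar ν p, extStar_one hν0 p⟩
  · exact ⟨extInv ν p, hp.antipode.XiU hν hν0 (-p.1), extStar_extInv hν0 hp,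
      extInv_extStar hν hν0 hp⟩
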